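/- For every integer n ≥ 1 and every r ∈ ℝ \ {0}, the function x ↦ (x − i r)^{−n} belongs to the closure in C₀(ℝ, ℂ) (supremum norm) of the linear span of {ρ_s : s ∈ ℝ \ {0}}. -/

import Mathlib

/-!
The closure `M` of the span of the resolvents is stable under multiplication by each `ρ_r`, so it
contains all powers `ρ_r ^ n` with `n ≥ 1`. Since multiplication by `ρ_r` is linear and continuous,
stability only has to be checked on the generators. For `s ≠ r` the resolvent identity
`ρ_s - ρ_r = i (s - r) ρ_s ρ_r` puts `ρ_s ρ_r` in the span (`resolvent_mul_mem_span`); the remaining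
product `ρ_r ρ_r` is the limit of `ρ_t ρ_r` as `t → r`, because `t ↦ ρ_t` is continuous in the
supremum norm (`norm_resolvent_sub_le`).
-/

open Complex ZeroAtInfty

/-- The set of basic resolvent functions `ρ_s(x) = (x - i s)⁻¹`, `s ∈ ℝ \ {0}`, viewed as
elements of `C₀(ℝ, ℂ)`. -/
def basicResolvents : Set C₀(ℝ, ℂ) :=
  {g | ∃ s : ℝ, s ≠ 0 ∧ ∀ x : ℝ, g x = ((x : ℂ) - Complex.I * s)⁻¹}

open Filter Topology

lemma abs_le_norm_sub_I_mul (x s : ℝ) : |s| ≤ ‖(x : ℂ) - I * s‖ := by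
  simpa using abs_im_le_norm ((x : ℂ) - I * s)

lemma sub_I_mul_ne_zero (x : ℝ) {s : ℝ} (hs : s ≠ 0) : (x : ℂ) - I * s ≠ 0 :=
  norm_pos_iff.1 ((abs_pos.2 hs).trans_le (abs_le_norm_sub_I_mul x s))

/-- The resolvent function `ρ_s(x) = (x - i s)⁻¹` as an element of `C₀(ℝ, ℂ)`. -/
noncomputable def resolventFun (s : ℝ) (hs : s ≠ 0) : C₀(ℝ, ℂ) where
  toFun x := ((x : ℂ) - I * s)⁻¹
  continuous_toFun := by
    have := fun x : ℝ => sub_I_mul_ne_zero x hs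
    fun_prop (disch := assumption)
  zero_at_infty' := by
    rw [← Metric.cobounded_eq_cocompact]
    exact tendsto_inv₀_cobounded.comp ((tendsto_sub_const_cobounded (I * (s : ℂ))).comp
      Complex.isometry_ofReal.antilipschitz.tendsto_cobounded)

@[simp] lemma resolventFun_apply (s : ℝ) (hs : s ≠ 0) (x : ℝ) :
    resolventFun s hs x = ((x : ℂ) - I * s)⁻¹ := rfl

lemma resolventFun_mem (s : ℝ) (hs : s ≠ 0) : resolventFun s hs ∈ basicResolvents :=
  ⟨s, hs, fun _ => rfl⟩

/-- The resolvent identity. -/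
lemma resolvent_sub (s t : ℝ) (hs : s ≠ 0) (ht : t ≠ 0) :
    resolventFun s hs - resolventFun t ht =
      (I * ((s : ℂ) - t)) • (resolventFun s hs * resolventFun t ht) := by
  ext x
  have h1 := sub_I_mul_ne_zero x hs
  have h2 := sub_I_mul_ne_zero x ht
  simp only [ZeroAtInftyContinuousMap.sub_apply, ZeroAtInftyContinuousMap.smul_apply,
    ZeroAtInftyContinuousMap.mul_apply, resolventFun_apply, smul_eq_mul]
  field_simp
  ring

lemma resolvent_mul_mem_span (s t : ℝ) (hs : s ≠ 0) (ht : t ≠ 0) (hst : s ≠ t) :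
    resolventFun s hs * resolventFun t ht ∈ Submodule.span ℂ basicResolvents := by
  have hc : I * ((s : ℂ) - t) ≠ 0 :=
    mul_ne_zero I_ne_zero (sub_ne_zero.2 (by exact_mod_cast hst))
  rw [← Submodule.smul_mem_iff _ hc, ← resolvent_sub]
  exact sub_mem (Submodule.subset_span (resolventFun_mem s hs))
    (Submodule.subset_span (resolventFun_mem t ht))

lemma norm_resolvent_le (s : ℝ) (hs : s ≠ 0) : ‖resolventFun s hs‖ ≤ |s|⁻¹ := by
  rw [← ZeroAtInftyContinuousMap.norm_toBCF_eq_norm]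
  refine (BoundedContinuousFunction.norm_le (by positivity)).2 fun x => ?_
  change ‖((x : ℂ) - I * s)⁻¹‖ ≤ _
  rw [norm_inv]
  exact inv_anti₀ (abs_pos.2 hs) (abs_le_norm_sub_I_mul x s)

lemma norm_resolvent_sub_le (s t : ℝ) (hs : s ≠ 0) (ht : t ≠ 0) :
    ‖resolventFun s hs - resolventFun t ht‖ ≤ |s - t| * (|s|⁻¹ * |t|⁻¹) := by
  have h : ‖I * ((s : ℂ) - t)‖ = |s - t| := by
    rw [norm_mul, norm_I, one_mul, ← ofReal_sub, norm_real, Real.norm_eq_abs]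
  rw [resolvent_sub, norm_smul, h]
  gcongr
  exact (norm_mul_le _ _).trans (mul_le_mul (norm_resolvent_le s hs) (norm_resolvent_le t ht)
    (norm_nonneg _) (by positivity))

/-- The square `ρ_r ρ_r` is the limit of the products `ρ_t ρ_r` along `t = r (1 + 1 / (k + 1))`. -/
lemma resolvent_sq_mem (r : ℝ) (hr : r ≠ 0) :
    resolventFun r hr * resolventFun r hr ∈
      (Submodule.span ℂ basicResolvents).topologicalClosure := by
  set t : ℕ → ℝ := fun k => r * (1 + 1 / ((k : ℝ) + 1)) with ht_def
  have ht0 : ∀ k, t k ≠ 0 := fun k => mul_ne_zero hr (by positivity)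
  have htr : ∀ k, t k ≠ r := fun k h => by
    have h2 : r * (1 / ((k : ℝ) + 1)) = 0 := by simp only [ht_def] at h; linarith
    exact mul_ne_zero hr (by positivity) h2
  have htlim : Tendsto t atTop (𝓝 r) := by
    simpa [ht_def] using (tendsto_one_div_add_atTop_nhds_zero_nat (𝕜 := ℝ)).const_add 1 |>.const_mul r
  have hlim : Tendsto (fun k => resolventFun (t k) (ht0 k)) atTop (𝓝 (resolventFun r hr)) := by
    rw [tendsto_iff_norm_sub_tendsto_zero]
    refine squeeze_zero (fun _ => norm_nonneg _)
      (fun k => norm_resolvent_sub_le (t k) r (ht0 k) hr) ?_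
    simpa using (htlim.sub_const r).abs.mul
      ((htlim.abs.inv₀ (abs_ne_zero.2 hr)).mul_const |r|⁻¹)
  exact mem_closure_of_tendsto (hlim.mul_const (resolventFun r hr))
    (Eventually.of_forall fun k => resolvent_mul_mem_span _ _ (ht0 k) hr (htr k))

lemma mul_resolvent_mem (r : ℝ) (hr : r ≠ 0) {f : C₀(ℝ, ℂ)}
    (hf : f ∈ (Submodule.span ℂ basicResolvents).topologicalClosure) :
    f * resolventFun r hr ∈ (Submodule.span ℂ basicResolvents).topologicalClosure := by
  set M := (Submodule.span ℂ basicResolvents).topologicalClosure with hM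
  have hle : M ≤ M.comap (LinearMap.mulRight ℂ (resolventFun r hr)) := by
    refine Submodule.topologicalClosure_minimal _ (Submodule.span_le.2 ?_)
      ((Submodule.isClosed_topologicalClosure _).preimage (continuous_mul_const _))
    rintro g ⟨s, hs, hg⟩
    obtain rfl : g = resolventFun s hs := by ext x; exact hg x
    change resolventFun s hs * resolventFun r hr ∈ M
    by_cases hsr : s = r
    · subst hsr
      exact resolvent_sq_mem s hs
    · exact Submodule.le_topologicalClosure _ (resolvent_mul_mem_span s r hs hr hsr)
  exact hle hf

/-- For every `n ≥ 1` and `r ≠ 0`, the function `x ↦ (x - i r)^{-n}` (an element of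
`C₀(ℝ, ℂ)`) lies in the closure (supremum norm) of the linear span of the basic
resolvents. -/
theorem resolvent_pow_mem_closure_span (n : ℕ) (hn : 1 ≤ n) (r : ℝ) (hr : r ≠ 0) :
    ∃ g : C₀(ℝ, ℂ), (∀ x : ℝ, g x = (((x : ℂ) - Complex.I * r) ^ n)⁻¹) ∧
      g ∈ closure (Submodule.span ℂ basicResolvents : Set C₀(ℝ, ℂ)) := by
  induction n, hn using Nat.le_induction with
  | base =>
    exact ⟨resolventFun r hr, fun x => by simp,
      subset_closure (Submodule.subset_span (resolventFun_mem r hr))⟩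
  | succ n _ ih =>
    obtain ⟨g, hg, hmem⟩ := ih
    refine ⟨g * resolventFun r hr, fun x => ?_, mul_resolvent_mem r hr hmem⟩
    rw [ZeroAtInftyContinuousMap.mul_apply, hg, resolventFun_apply, pow_succ, mul_inv]
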